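/- arXiv:2105.13654 — 3 statements merged into one kernel-verified Lean document; each statement's English description precedes it below -/
import Mathlib

section
/- Let V be a finite-dimensional real vector space, B : V × V → ℝ a nondegenerate symmetric bilinear form, and A : V → V a linear map with B(Ax, Ay) = B(x, y) for all x, y. On V ⊕ V* define the pairing ⟨v + ξ, w + η⟩ = ½(ξ(w) + η(v)). Define s_A : V × V → V ⊕ V* by s_A(ξ, ξ') = (ξ − Aξ') + B(·, ξ + Aξ'), where B(·, u) denotes the linear functional x ↦ B(x, u). Then for all ζ₁ = (ξ₁, ξ'₁) and ζ₂ = (ξ₂, ξ'₂) in V × V one has ⟨s_A(ζ₁), s_A(ζ₂)⟩ = B(ξ₁, ξ₂) − B(ξ'₁, ξ'₂). -/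
/-- For a nondegenerate symmetric bilinear form `B` on a finite-dimensional real vector space `V`
and a `B`-orthogonal map `A`, the map `s_A(ξ, ξ') = (ξ - Aξ') + B(·, ξ + Aξ')` into `V ⊕ V*`
is isometric for the canonical pairing `⟨v + ξ, w + η⟩ = ½(ξ(w) + η(v))` and the split form
`B_𝔡((ξ₁,ξ'₁),(ξ₂,ξ'₂)) = B(ξ₁,ξ₂) - B(ξ'₁,ξ'₂)`. -/
theorem stmt4 (V : Type*) [AddCommGroup V] [Module ℝ V] [FiniteDimensional ℝ V]
    (B : V →ₗ[ℝ] V →ₗ[ℝ] ℝ)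
    (hsymm : ∀ x y : V, B x y = B y x)
    (hnd : ∀ x : V, (∀ y : V, B x y = 0) → x = 0)
    (A : V →ₗ[ℝ] V)
    (hA : ∀ x y : V, B (A x) (A y) = B x y)
    (pair : (V × Module.Dual ℝ V) → (V × Module.Dual ℝ V) → ℝ)
    (hpair : ∀ p q : V × Module.Dual ℝ V, pair p q = (1 / 2) * (p.2 q.1 + q.2 p.1))
    (s : V × V → V × Module.Dual ℝ V)
    (hs : ∀ ζ : V × V, s ζ = (ζ.1 - A ζ.2, B.flip (ζ.1 + A ζ.2))) :
    ∀ ζ₁ ζ₂ : V × V, pair (s ζ₁) (s ζ₂) = B ζ₁.1 ζ₂.1 - B ζ₁.2 ζ₂.2 := by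
  rintro ⟨x, x'⟩ ⟨y, y'⟩
  rw [hpair, hs, hs]
  change (1 / 2) * (B (y - A y') (x + A x') + B (x - A x') (y + A y')) = B x y - B x' y'
  simp only [map_add, map_sub, LinearMap.sub_apply]
  -- By symmetry the mixed terms cancel; the remaining ones are `B x y` and `B (A x') (A y')`.
  linear_combination (1 / 2) * (hsymm y x + hsymm y (A x') - hsymm (A y') x
    - hsymm (A y') (A x')) - hA x' y'
end

section
/- Let R be a commutative ring, M an R-module, Q a quadratic form on M, and Cl(Q) the Clifford algebra with canonical embedding ι : M → Cl(Q) and main involution 'involute' (the algebra automorphism determined by involute(ι m) = −ι m). For a, b ∈ Cl(Q) define ρ(a,b) : Cl(Q) → Cl(Q) by ρ(a,b)(x) = a·x − involute(x)·b. Then for every Ξ ∈ Cl(Q) with involute(Ξ) = −Ξ, every u₁, u₂ ∈ M, and every x ∈ Cl(Q): ρ(Ξ,Ξ)(ρ(ι u₁, ι u₂)(x)) + ρ(ι u₁, ι u₂)(ρ(Ξ,Ξ)(x)) = (Ξ·ι u₁ + ι u₁·Ξ)·x − x·(Ξ·ι u₂ + ι u₂·Ξ). -/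
open CliffordAlgebra

/-- The spinorial action of a pair `(a, b)` of Clifford algebra elements:
`ρ(a,b)(x) = a·x − involute(x)·b`. -/
def spinAction {R M : Type*} [CommRing R] [AddCommGroup M] [Module R M]
    {Q : QuadraticForm R M} (a b x : CliffordAlgebra Q) : CliffordAlgebra Q :=
  a * x - CliffordAlgebra.involute x * b

/-- For an involute-odd element `Ξ` of a Clifford algebra and vectors `u₁, u₂`, the
anticommutator of the spinorial actions `ρ(Ξ,Ξ)` and `ρ(ι u₁, ι u₂)` is given by
`x ↦ (Ξ·ιu₁ + ιu₁·Ξ)·x − x·(Ξ·ιu₂ + ιu₂·Ξ)`. -/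
theorem stmt5 {R M : Type*} [CommRing R] [AddCommGroup M] [Module R M]
    (Q : QuadraticForm R M)
    (Ξ : CliffordAlgebra Q) (hΞ : CliffordAlgebra.involute Ξ = -Ξ)
    (u₁ u₂ : M) (x : CliffordAlgebra Q) :
    spinAction Ξ Ξ (spinAction (ι Q u₁) (ι Q u₂) x)
      + spinAction (ι Q u₁) (ι Q u₂) (spinAction Ξ Ξ x)
      = (Ξ * ι Q u₁ + ι Q u₁ * Ξ) * x - x * (Ξ * ι Q u₂ + ι Q u₂ * Ξ) := by
  -- `Ξ`, `ι u₁` and `ι u₂` are odd, so the mixed terms, those with `involute x` between two odd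
  -- factors, occur in the two compositions with opposite signs and cancel.
  simp only [spinAction, map_sub, map_mul, involute_ι, involute_involute, hΞ]
  noncomm_ring
end

section
/- Let Q be a quadratic form on a module M over a commutative ring, with Clifford algebra Cl(Q). Let w₁, …, w_m ∈ M satisfy Q(w_i) = 0 for all i and polar Q(w_i, w_s) = 0 for all i ≠ s. Fix an index j and let b ∈ M satisfy Q(b) = 0, polar Q(w_j, b) = 1, and polar Q(w_i, b) = 0 for all i ≠ j. Set c := ι(w_j)·ι(b) − ι(b)·ι(w_j) and φ := ι(w₁)·ι(w₂)⋯ι(w_m). Then c·φ = φ and φ·c = −φ. -/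
/-!
Write `x = ι(w_j)`, `y = ι(b)`. The relation `x * y + y * x = 1` turns `c = x * y - y * x` into
both `1 - 2 * y * x` and `2 * x * y - 1`, so it is enough that `x * φ = 0` and `φ * x = 0`. These
hold because `x` anticommutes with every factor of `φ`, is itself one of the factors, and squares
to zero: moving `x` through `φ` up to its own copy produces `x * x`
(`mul_list_prod_eq_zero_of_anticomm`), and moving it all the way through changes only the sign
(`list_prod_mul_of_anticomm`).
-/

open CliffordAlgebra

theorem mul_list_prod_eq_zero_of_anticomm {A : Type*} [Ring A] (x : A) (hx : x * x = 0)
    (l : List A) (hl : ∀ y ∈ l, x * y = -(y * x)) (hmem : x ∈ l) : x * l.prod = 0 := by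
  induction l with
  | nil => simp at hmem
  | cons a t ih =>
    rw [List.prod_cons]
    rcases List.mem_cons.1 hmem with rfl | h
    · rw [← mul_assoc, hx, zero_mul]
    · rw [← mul_assoc, hl a (by simp), neg_mul, mul_assoc,
        ih (fun y hy => hl y (by simp [hy])) h, mul_zero, neg_zero]

theorem list_prod_mul_of_anticomm {A : Type*} [Ring A] (x : A)
    (l : List A) (hl : ∀ y ∈ l, x * y = -(y * x)) :
    l.prod * x = (-1) ^ l.length * (x * l.prod) := by
  induction l with
  | nil => simp
  | cons a t ih =>
    have ha : a * x = -(x * a) := by rw [hl a (by simp), neg_neg]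
    rw [List.prod_cons, mul_assoc, ih (fun y hy => hl y (by simp [hy])), List.length_cons,
      ← mul_assoc, ← ((Commute.neg_one_left a).pow_left t.length).eq, mul_assoc, ← mul_assoc a x,
      ha, pow_succ]
    simp [mul_assoc]

/-- Let `w₁, …, w_m` be pairwise `polar`-orthogonal isotropic vectors, and `b` an isotropic
vector with `polar Q (w_j, b) = 1` and `polar Q (w_i, b) = 0` for `i ≠ j`. Then, with
`c = ι(w_j)·ι(b) − ι(b)·ι(w_j)` and `φ = ι(w₁)·ι(w₂)⋯ι(w_m)`, one has `c·φ = φ` and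
`φ·c = −φ`. -/
theorem stmt11 {R M : Type*} [CommRing R] [AddCommGroup M] [Module R M]
    (Q : QuadraticForm R M) (m : ℕ) (w : Fin m → M)
    (hQ : ∀ i, Q (w i) = 0)
    (hpolar : ∀ i s, i ≠ s → QuadraticMap.polar (⇑Q) (w i) (w s) = 0)
    (j : Fin m) (b : M) (hb : Q b = 0)
    (hjb : QuadraticMap.polar (⇑Q) (w j) b = 1)
    (hib : ∀ i, i ≠ j → QuadraticMap.polar (⇑Q) (w i) b = 0) :
    (ι Q (w j) * ι Q b - ι Q b * ι Q (w j)) * (List.ofFn fun i => ι Q (w i)).prod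
        = (List.ofFn fun i => ι Q (w i)).prod ∧
    (List.ofFn fun i => ι Q (w i)).prod * (ι Q (w j) * ι Q b - ι Q b * ι Q (w j))
        = -(List.ofFn fun i => ι Q (w i)).prod := by
  have hanti : ∀ y ∈ List.ofFn fun i => ι Q (w i), ι Q (w j) * y = -(y * ι Q (w j)) := by
    intro y hy
    obtain ⟨i, rfl⟩ := (List.mem_ofFn' _ _).1 hy
    by_cases h : i = j
    · subst h
      simp [hQ]
    · rw [eq_neg_iff_add_eq_zero, ι_mul_ι_add_swap, hpolar j i (Ne.symm h), map_zero]
  have hl : ι Q (w j) * (List.ofFn fun i => ι Q (w i)).prod = 0 :=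
    mul_list_prod_eq_zero_of_anticomm _ (by simp [hQ]) _ hanti
      ((List.mem_ofFn' _ _).2 ⟨j, rfl⟩)
  have hr : (List.ofFn fun i => ι Q (w i)).prod * ι Q (w j) = 0 := by
    rw [list_prod_mul_of_anticomm _ _ hanti, hl, mul_zero]
  have hc : ι Q (w j) * ι Q b + ι Q b * ι Q (w j) = 1 := by
    rw [ι_mul_ι_add_swap, hjb, map_one]
  generalize (List.ofFn fun i => ι Q (w i)).prod = φ at hl hr ⊢
  constructor
  · rw [eq_sub_of_add_eq hc, sub_mul, sub_mul, mul_assoc, hl]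
    simp
  · rw [eq_sub_of_add_eq' hc, mul_sub, mul_sub, ← mul_assoc, hr]
    simp
end
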